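/- Let λ be a real number with 8/13 < λ < 1. If f is a close-to-convex function on the unit disk with Taylor coefficients a_k, then |λ a_4² − a_7| ≤ (λ(80 − 49λ) + 32(2 − λ)√(λ(2 − λ))) / (λ(32 − 25λ)). -/

import Mathlib

open Complex Metric

/-- The k-th Taylor coefficient of `f` at `0`: `a_k = f^{(k)}(0)/k!`. -/
noncomputable def taylorCoeff (f : ℂ → ℂ) (k : ℕ) : ℂ :=
  iteratedDeriv k f 0 / (Nat.factorial k)

/-- `g` is a (normalized) starlike function on the unit disk. -/
def IsStarlikeFn (g : ℂ → ℂ) : Prop :=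
  DifferentiableOn ℂ g (ball (0 : ℂ) 1) ∧ g 0 = 0 ∧ deriv g 0 = 1 ∧
    ∀ z ∈ ball (0 : ℂ) 1 \ {0}, 0 < (z * deriv g z / g z).re

/-- `f` is a (normalized) close-to-convex function on the unit disk. -/
def IsCloseToConvex (f : ℂ → ℂ) : Prop :=
  DifferentiableOn ℂ f (ball (0 : ℂ) 1) ∧ f 0 = 0 ∧ deriv f 0 = 1 ∧
    ∃ θ : ℝ, ∃ g : ℂ → ℂ, IsStarlikeFn g ∧
      ∀ z ∈ ball (0 : ℂ) 1 \ {0},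
        0 < (Complex.exp (θ * Complex.I) * z * deriv f z / g z).re

/-!
A starlike `g` has the form `z h²` with `Re h > 1 / 2` (Marx–Strohhäcker), so the derivative of a
close-to-convex `f` is `p h²` with `Re (e p) > 0` for some unimodular `e`. By Herglotz' theorem the
Taylor series of `h` and `p` lie in the closed convex hulls of the series `1 / (1 - v X)` and
`(1 - x X) / (1 - v X)` with `x` and `v` in the closed unit disk. Feynman's parametrization writes a
product of such kernels as an average of powers of a single one, so the Taylor series of `f'` lies
in the closed convex hull of the series `(1 - x X) / (1 - v X)³`.

For a suitable unimodular `η` the norm of `λ aₙ² - a₂ₙ₋₁` is at most `λ (Re η aₙ)² - Re (η² a₂ₙ₋₁)`,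
a continuous convex function of the series, so it suffices to bound the latter on these kernels.
There the claimed bound exceeds it by a sum of nonnegative terms, one of them a quadratic form whose
discriminant vanishes for the right choice of a parameter `t`.
-/

open MeasureTheory PowerSeries Set Filter Topology
open scoped PowerSeries.WithPiTopology ComplexConjugate ComplexOrder

section AveragesInConvexSets

variable {α : Type*} [MeasurableSpace α] {μ : Measure α}

theorem convex_integral_mem_pi {ι E : Type*} [IsProbabilityMeasure μ] [NormedAddCommGroup E]
    [NormedSpace ℝ E] [CompleteSpace E] {C : Set (ι → E)} (hC : Convex ℝ C) (hCc : IsClosed C)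
    {s : α → ι → E} (hs : ∀ᵐ y ∂μ, s y ∈ C) (hint : ∀ i, Integrable (fun y => s y i) μ) :
    (fun i => ∫ y, s y i ∂μ) ∈ C := by
  rw [← hCc.closure_eq, _root_.mem_closure_iff]
  intro O hO hmem
  obtain ⟨I, u, hu, hIu⟩ := isOpen_pi_iff.mp hO _ hmem
  let restr : (ι → E) →ₗ[ℝ] (I → E) := LinearMap.funLeft ℝ E (fun i : I => (i : ι))
  have hrestr : Integrable (fun y => restr (s y)) μ := Integrable.of_eval fun i => hint i
  have hmean : ∫ y, restr (s y) ∂μ ∈ closure (restr '' C) :=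
    (hC.linear_image restr).closure.integral_mem isClosed_closure
      (hs.mono fun y hy => subset_closure (mem_image_of_mem _ hy)) hrestr
  obtain ⟨_, hyU, ⟨x, hxC, rfl⟩⟩ := _root_.mem_closure_iff.mp hmean
    (univ.pi fun i : I => u i) (isOpen_set_pi finite_univ fun i _ => (hu i i.2).1)
    (fun i _ => by
      rw [eval_integral (f := fun y => restr (s y)) fun i => hint i]
      exact (hu i i.2).2)
  exact ⟨x, hIu fun i hi => hyU ⟨i, hi⟩ (mem_univ _), hxC⟩

theorem convex_mem_of_coeff_eq_integral {C : Set ℂ⟦X⟧} (hC : Convex ℝ C) (hCc : IsClosed C)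
    {w : α → ℝ} (hw : Integrable w μ) (hw_nonneg : 0 ≤ᵐ[μ] w) (hw_one : ∫ y, w y ∂μ = 1)
    {s : α → ℂ⟦X⟧} (hs : ∀ᵐ y ∂μ, s y ∈ C)
    (hint : ∀ n, Integrable (fun y => w y • coeff n (s y)) μ) {F : ℂ⟦X⟧}
    (hF : ∀ n, coeff n F = ∫ y, w y • coeff n (s y) ∂μ) : F ∈ C := by
  set ν := μ.withDensity fun y => ENNReal.ofReal (w y) with hν
  have hwm : AEMeasurable (fun y => ENNReal.ofReal (w y)) μ := hw.aemeasurable.ennreal_ofReal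
  have hfin : ∀ᵐ y ∂μ, ENNReal.ofReal (w y) < ⊤ := .of_forall fun _ => ENNReal.ofReal_lt_top
  have : IsProbabilityMeasure ν := ⟨by
    rw [hν, withDensity_apply _ .univ, Measure.restrict_univ,
      ← ofReal_integral_eq_lintegral_ofReal hw hw_nonneg, hw_one, ENNReal.ofReal_one]⟩
  have htoReal (n : ℕ) : (fun y => (ENNReal.ofReal (w y)).toReal • coeff n (s y)) =ᵐ[μ]
      fun y => w y • coeff n (s y) := by
    filter_upwards [hw_nonneg] with y hy
    rw [ENNReal.toReal_ofReal hy]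
  have hmean : (fun d => ∫ y, s y d ∂ν) ∈ C := by
    refine convex_integral_mem_pi hC hCc (withDensity_absolutelyContinuous _ _ hs) fun d => ?_
    obtain ⟨n, rfl⟩ : ∃ n, Finsupp.single () n = d := ⟨d (), by ext; simp⟩
    rw [hν, integrable_withDensity_iff_integrable_smul₀' hwm hfin]
    exact (hint n).congr (htoReal n).symm
  suffices F = (fun d => ∫ y, s y d ∂ν : ℂ⟦X⟧) from this ▸ hmean
  ext n
  rw [hF, ← integral_congr_ae (htoReal n),
    ← integral_withDensity_eq_integral_toReal_smul₀ hwm hfin]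
  rfl

end AveragesInConvexSets

section ClosedConvexHull

theorem mapsTo_closedConvexHull {𝕜 E F : Type*} [Field 𝕜] [LinearOrder 𝕜] [IsStrictOrderedRing 𝕜]
    [AddCommGroup E] [Module 𝕜 E] [TopologicalSpace E] [AddCommGroup F] [Module 𝕜 F]
    [TopologicalSpace F] {S : Set E} {D : Set F} {f : E →ᵃ[𝕜] F} (hf : Continuous f)
    (hD : Convex 𝕜 D) (hDc : IsClosed D) (h : MapsTo f S D) :
    MapsTo f (closedConvexHull 𝕜 S) D :=
  closedConvexHull_min h (hD.affine_preimage f) (hDc.preimage hf)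

theorem mul_mem_of_mem_closedConvexHull {A : Type*} [Ring A] [Algebra ℝ A] [TopologicalSpace A]
    [ContinuousMul A] {S T D : Set A} (hD : Convex ℝ D) (hDc : IsClosed D)
    (h : ∀ x ∈ S, ∀ y ∈ T, x * y ∈ D) {x y : A} (hx : x ∈ closedConvexHull ℝ S)
    (hy : y ∈ closedConvexHull ℝ T) : x * y ∈ D := by
  refine mapsTo_closedConvexHull (f := (LinearMap.mulRight ℝ y).toAffineMap)
    (continuous_mul_const y) hD hDc (fun x hx => ?_) hx
  exact mapsTo_closedConvexHull (f := (LinearMap.mulLeft ℝ x).toAffineMap)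
    (continuous_const_mul x) hD hDc (fun y hy => h x hx y hy) hy

end ClosedConvexHull

section InvOneSubMulPow

/-- The power series `(1 - v X)⁻ᵈ`, as a rescaling of Mathlib's `invOneSubPow`. For `d = 1` these
are the kernels of the Herglotz representation. -/
noncomputable def invOneSubMulPow {R : Type*} [CommRing R] (d : ℕ) (v : R) : R⟦X⟧ :=
  rescale v (invOneSubPow R d)

variable {R : Type*} [CommRing R]

theorem coeff_invOneSubMulPow_succ (d n : ℕ) (v : R) :
    coeff n (invOneSubMulPow (d + 1) v) = (d + n).choose d * v ^ n := by
  rw [invOneSubMulPow, coeff_rescale, invOneSubPow_val_succ_eq_mk_add_choose, coeff_mk, mul_comm]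

theorem invOneSubMulPow_zero (v : R) : invOneSubMulPow 0 v = 1 := by
  simp [invOneSubMulPow, invOneSubPow_zero]

theorem one_sub_mul_invOneSubMulPow_succ (d : ℕ) (v : R) :
    (1 - C v * X) * invOneSubMulPow (d + 1) v = invOneSubMulPow d v := by
  have := congrArg (rescale v) (one_sub_pow_mul_invOneSubPow_val_add_eq_invOneSubPow_val R d 1)
  simpa [rescale_X, invOneSubMulPow] using this

end InvOneSubMulPow

section FeynmanParametrization

theorem hasDerivAt_coeff_invOneSubMulPow_mul (d n : ℕ) (v : ℂ) (Q : ℂ⟦X⟧) :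
    HasDerivAt (fun v : ℂ => coeff n (invOneSubMulPow (d + 1) v * Q))
      ((d + 1 : ℂ) * coeff n (X * invOneSubMulPow (d + 2) v * Q)) v := by
  have hcoeff (k : ℕ) : HasDerivAt (fun v : ℂ => coeff k (invOneSubMulPow (d + 1) v))
      ((d + 1 : ℂ) * coeff k (X * invOneSubMulPow (d + 2) v)) v := by
    simp only [coeff_invOneSubMulPow_succ]
    refine ((hasDerivAt_pow k v).const_mul _).congr_deriv ?_
    rcases k with _ | k
    · simp
    · have hchoose : ((d + (k + 1)).choose d : ℂ) * (k + 1)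
          = (d + 1 + k).choose (d + 1) * (d + 1) := by
        have := Nat.choose_succ_right_eq (d + (k + 1)) d
        rw [Nat.add_sub_cancel_left] at this
        rw [add_right_comm, add_assoc]
        exact_mod_cast this.symm
      rw [coeff_succ_X_mul, coeff_invOneSubMulPow_succ, Nat.add_sub_cancel]
      push_cast
      linear_combination v ^ k * hchoose
  simp only [coeff_mul _ _ Q, Finset.mul_sum, ← mul_assoc]
  exact HasDerivAt.fun_sum fun p _ => (hcoeff p.1).mul_const _

theorem hasDerivAt_coeff_segment (d n : ℕ) (a b z : ℂ) :
    HasDerivAt (fun z => z ^ (d + 1) *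
        coeff n (invOneSubMulPow (d + 1) (z * a + (1 - z) * b) * invOneSubMulPow 1 b))
      ((d + 1) * z ^ d * coeff n (invOneSubMulPow (d + 2) (z * a + (1 - z) * b))) z := by
  set v := z * a + (1 - z) * b with hv
  have hline : HasDerivAt (fun z => z * a + (1 - z) * b) (a - b) z := by
    refine (((hasDerivAt_id z).mul_const a).add
      (((hasDerivAt_id z).const_sub 1).mul_const b)).congr_deriv ?_
    ring
  refine ((hasDerivAt_pow (d + 1) z).mul
    ((hasDerivAt_coeff_invOneSubMulPow_mul d n v _).comp z hline)).congr_deriv ?_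
  -- The key identity is `(1 - v X) + z (a - b) X = 1 - b X`.
  have hseries : invOneSubMulPow (d + 2) v = invOneSubMulPow (d + 1) v * invOneSubMulPow 1 b
      + C (z * (a - b)) * (X * invOneSubMulPow (d + 2) v * invOneSubMulPow 1 b) := by
    have hb := (one_sub_mul_invOneSubMulPow_succ 0 b).trans (invOneSubMulPow_zero b)
    rw [← one_sub_mul_invOneSubMulPow_succ (d + 1) v, hv]
    simp only [map_add, map_sub, map_mul, map_one] at hb ⊢
    linear_combination -invOneSubMulPow (d + 2) (z * a + (1 - z) * b) * hb
  conv_rhs => rw [hseries]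
  simp only [Function.comp_apply, ← hv, Nat.add_sub_cancel, map_add, coeff_C_mul]
  push_cast
  ring

theorem coeff_invOneSubMulPow_mul_eq_integral (d n : ℕ) (a b : ℂ) :
    coeff n (invOneSubMulPow (d + 1) a * invOneSubMulPow 1 b) =
      ∫ s : ℝ in Ioc 0 1, ((d + 1) * s ^ d : ℝ) •
        coeff n (invOneSubMulPow (d + 2) (s * a + (1 - s) * b : ℂ)) := by
  have hcont : Continuous fun s : ℝ => ((d : ℂ) + 1) * s ^ d *
      coeff n (invOneSubMulPow (d + 2) (s * a + (1 - s) * b : ℂ)) := by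
    simp only [coeff_invOneSubMulPow_succ]
    fun_prop
  have hftc := intervalIntegral.integral_eq_sub_of_hasDerivAt
    (fun s _ => (hasDerivAt_coeff_segment d n a b s).comp_ofReal) (hcont.intervalIntegrable 0 1)
  rw [intervalIntegral.integral_of_le zero_le_one] at hftc
  simpa using hftc.symm

theorem invOneSubMulPow_mul_mem_closedConvexHull {D : Set ℂ} (hD : Convex ℝ D) {a b : ℂ}
    (ha : a ∈ D) (hb : b ∈ D) (d : ℕ) :
    invOneSubMulPow (d + 1) a * invOneSubMulPow 1 b ∈
      closedConvexHull ℝ (invOneSubMulPow (d + 2) '' D) := by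
  have hweight : Continuous fun s : ℝ => (d + 1) * s ^ d := by fun_prop
  refine convex_mem_of_coeff_eq_integral convex_closedConvexHull isClosed_closedConvexHull
    (μ := volume.restrict (Ioc (0 : ℝ) 1))
    (hweight.integrableOn_Icc.mono_set Ioc_subset_Icc_self) ?_ ?_ ?_ ?_
    fun n => coeff_invOneSubMulPow_mul_eq_integral d n a b
  · filter_upwards [ae_restrict_mem measurableSet_Ioc] with s hs
    have := hs.1.le
    positivity
  · rw [← intervalIntegral.integral_of_le zero_le_one, intervalIntegral.integral_const_mul,
      integral_pow]
    simp [mul_inv_cancel₀ (by positivity : (d : ℝ) + 1 ≠ 0)]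
  · filter_upwards [ae_restrict_mem measurableSet_Ioc] with s hs
    refine subset_closedConvexHull (mem_image_of_mem _ ?_)
    simpa using hD ha hb hs.1.le (sub_nonneg.mpr hs.2) (by ring)
  · intro n
    have hcont : Continuous fun s : ℝ => ((d + 1) * s ^ d : ℝ) •
        coeff n (invOneSubMulPow (d + 2) (s * a + (1 - s) * b : ℂ)) := by
      simp only [coeff_invOneSubMulPow_succ]
      fun_prop
    exact hcont.integrableOn_Icc.mono_set Ioc_subset_Icc_self

end FeynmanParametrization

section TaylorSeries

/-- The Taylor series `∑ aₖ Xᵏ` of `f` at `0`, as a formal power series: closed convex hulls of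
functions are taken coefficientwise. -/
noncomputable def taylorSeries (f : ℂ → ℂ) : ℂ⟦X⟧ :=
  PowerSeries.mk (taylorCoeff f)

@[simp]
theorem coeff_taylorSeries (f : ℂ → ℂ) (n : ℕ) : coeff n (taylorSeries f) = taylorCoeff f n :=
  coeff_mk _ _

theorem taylorSeries_congr {f g : ℂ → ℂ} (h : f =ᶠ[𝓝 0] g) : taylorSeries f = taylorSeries g := by
  ext n
  simp [taylorCoeff, h.iteratedDeriv_eq n]

theorem taylorCoeff_deriv (f : ℂ → ℂ) (n : ℕ) :
    taylorCoeff (deriv f) n = (n + 1) * taylorCoeff f (n + 1) := by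
  have hn : (n : ℂ) + 1 ≠ 0 := n.cast_add_one_ne_zero
  rw [taylorCoeff, taylorCoeff, iteratedDeriv_succ', Nat.factorial_succ]
  push_cast
  field_simp

theorem taylorSeries_comp_const_mul (f : ℂ → ℂ) (r : ℂ) :
    taylorSeries (fun z => f (r * z)) = rescale r (taylorSeries f) := by
  have hderiv (n : ℕ) :
      iteratedDeriv n (fun z => f (r * z)) = fun z => r ^ n * iteratedDeriv n f (r * z) := by
    induction n with
    | zero => simp
    | succ n ih =>
      ext z
      rw [iteratedDeriv_succ, ih, deriv_const_mul_field, deriv_comp_mul_left, iteratedDeriv_succ,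
        smul_eq_mul, pow_succ, mul_assoc]
  ext n
  simp [taylorCoeff, hderiv, mul_div_assoc]

theorem taylorSeries_mul {f g : ℂ → ℂ} (hf : AnalyticAt ℂ f 0) (hg : AnalyticAt ℂ g 0) :
    taylorSeries (fun z => f z * g z) = taylorSeries f * taylorSeries g := by
  ext n
  simp only [coeff_taylorSeries, taylorCoeff, coeff_mul]
  rw [iteratedDeriv_fun_mul hf.contDiffAt hg.contDiffAt, Finset.sum_div,
    Finset.Nat.sum_antidiagonal_eq_sum_range_succ fun i j =>
      iteratedDeriv i f 0 / i.factorial * (iteratedDeriv j g 0 / j.factorial)]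
  refine Finset.sum_congr rfl fun i hi => ?_
  have hfac (j : ℕ) : (j.factorial : ℂ) ≠ 0 := by exact_mod_cast j.factorial_ne_zero
  rw [Nat.cast_choose ℂ (Nat.le_of_lt_succ (Finset.mem_range.mp hi))]
  field_simp [hfac]

theorem taylorSeries_const (c : ℂ) : taylorSeries (fun _ => c) = C c := by
  ext n
  rcases n with _ | n <;> simp [taylorCoeff, iteratedDeriv_const, coeff_C]

theorem taylorSeries_sub {f g : ℂ → ℂ} (hf : AnalyticAt ℂ f 0) (hg : AnalyticAt ℂ g 0) :
    taylorSeries (fun z => f z - g z) = taylorSeries f - taylorSeries g := by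
  ext n
  simp [taylorCoeff, iteratedDeriv_fun_sub hf.contDiffAt hg.contDiffAt, sub_div]

theorem taylorSeries_const_mul {f : ℂ → ℂ} (c : ℂ) :
    taylorSeries (fun z => c * f z) = C c * taylorSeries f := by
  ext n
  simp [taylorCoeff, mul_div_assoc]

end TaylorSeries

section Herglotz

variable {k : ℂ → ℂ}

theorem circleAverage_inv_pow_mul (hk : DifferentiableOn ℂ k (closedBall 0 1)) (n : ℕ) :
    Real.circleAverage (fun z => z⁻¹ ^ n * k z) 0 1 = taylorCoeff k n := by
  have hcauchy := hk.circleIntegral_one_div_sub_center_pow_smul one_pos n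
  have hpow : (fun z : ℂ => (z - 0)⁻¹ • (z⁻¹ ^ n * k z))
      = fun z => (1 / (z - 0) ^ (n + 1)) • k z := by
    ext z
    simp only [sub_zero, smul_eq_mul, one_div, inv_pow, pow_succ, mul_inv]
    ring
  rw [Real.circleAverage_eq_circleIntegral one_ne_zero, hpow, hcauchy, taylorCoeff, smul_smul,
    smul_eq_mul, ← mul_div_assoc, inv_mul_cancel₀ two_pi_I_ne_zero, one_div_mul_eq_div]

theorem circleAverage_pow_mul (hk : DifferentiableOn ℂ k (closedBall 0 1)) (n : ℕ) :
    Real.circleAverage (fun z => z ^ n * k z) 0 1 = 0 ^ n * k 0 := by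
  have hdiff : DifferentiableOn ℂ (fun z => z ^ n * k z) (closedBall 0 |1|) :=
    (differentiableOn_pow n).mul (by simpa using hk)
  exact (hdiff.mono closure_ball_subset_closedBall).diffContOnCl.circleAverage

theorem circleAverage_re_mul_inv_pow (hk : DifferentiableOn ℂ k (closedBall 0 1)) (hk0 : k 0 = 1)
    (n : ℕ) :
    Real.circleAverage (fun z => (2 * (k z).re - 1) • z⁻¹ ^ n) 0 1 = taylorCoeff k n := by
  have hk_cont : ContinuousOn k (sphere 0 1) := hk.continuousOn.mono sphere_subset_closedBall
  have hinv_cont : ContinuousOn (fun z : ℂ => z⁻¹) (sphere 0 1) :=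
    continuousOn_inv₀.mono fun z hz => ne_zero_of_mem_unit_sphere ⟨z, hz⟩
  have hconj : Real.circleAverage (fun z => conj (z ^ n * (k z - 1))) 0 1 = 0 := by
    have := (conjCLE : ℂ →L[ℝ] ℂ).circleAverage_comp_comm (f := fun z => z ^ n * (k z - 1))
      (c := 0) (R := 1) (ContinuousOn.circleIntegrable zero_le_one (by fun_prop))
    rw [circleAverage_pow_mul (hk.sub_const 1), hk0, sub_self, mul_zero, map_zero] at this
    exact this
  have hsphere : EqOn (fun z => (2 * (k z).re - 1) • z⁻¹ ^ n)
      (fun z => z⁻¹ ^ n * k z + conj (z ^ n * (k z - 1))) (sphere 0 |1|) := by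
    intro z hz
    have hz1 : ‖z‖ = 1 := by simpa using hz
    have hre := add_conj (k z)
    simp only [real_smul, map_mul, map_pow, map_sub, map_one, ← inv_eq_conj hz1, ofReal_sub,
      ofReal_one, ← hre]
    ring
  rw [Real.circleAverage_congr_sphere hsphere, Real.circleAverage_fun_add, hconj, add_zero,
    circleAverage_inv_pow_mul hk]
  · exact ContinuousOn.circleIntegrable zero_le_one (by fun_prop)
  · exact ContinuousOn.circleIntegrable zero_le_one
      (continuous_conj.comp_continuousOn (by fun_prop))

theorem taylorCoeff_eq_integral_re (hk : DifferentiableOn ℂ k (closedBall 0 1)) (hk0 : k 0 = 1)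
    (n : ℕ) :
    taylorCoeff k n = ∫ θ in Ioc 0 (2 * Real.pi),
      ((2 * Real.pi)⁻¹ * (2 * (k (circleMap 0 1 θ)).re - 1)) •
        coeff n (invOneSubMulPow 1 (circleMap 0 1 θ)⁻¹) := by
  rw [← circleAverage_re_mul_inv_pow hk hk0, Real.circleAverage_def,
    intervalIntegral.integral_of_le Real.two_pi_pos.le, ← integral_smul]
  simp only [coeff_invOneSubMulPow_succ, smul_smul]
  simp

theorem taylorSeries_mem_closedConvexHull_of_closedBall
    (hk : DifferentiableOn ℂ k (closedBall 0 1)) (hk0 : k 0 = 1)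
    (hre : ∀ z ∈ sphere 0 1, 1 / 2 ≤ (k z).re) :
    taylorSeries k ∈ closedConvexHull ℝ (invOneSubMulPow 1 '' closedBall 0 1) := by
  have hcircle (θ : ℝ) : circleMap 0 1 θ ∈ sphere (0 : ℂ) 1 := circleMap_mem_sphere 0 zero_le_one θ
  have hk_cont : Continuous fun θ => k (circleMap 0 1 θ) :=
    (hk.continuousOn.mono sphere_subset_closedBall).comp_continuous (by fun_prop) hcircle
  have hinv_cont : Continuous fun θ => (circleMap 0 1 θ)⁻¹ :=
    Continuous.inv₀ (by fun_prop) fun θ => circleMap_ne_center one_ne_zero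
  have hweight : Continuous fun θ =>
      (2 * Real.pi)⁻¹ * (2 * (k (circleMap 0 1 θ)).re - 1) :=
    (((continuous_re.comp hk_cont).const_mul 2).sub continuous_const).const_mul _
  refine convex_mem_of_coeff_eq_integral convex_closedConvexHull isClosed_closedConvexHull
    (μ := volume.restrict (Ioc 0 (2 * Real.pi)))
    (hweight.integrableOn_Icc.mono_set Ioc_subset_Icc_self) ?_ ?_ ?_ ?_
    fun n => (coeff_taylorSeries k n).trans (taylorCoeff_eq_integral_re hk hk0 n)
  · refine .of_forall fun θ => mul_nonneg (by positivity) ?_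
    linarith [hre _ (hcircle θ)]
  · have hcoeff_zero := taylorCoeff_eq_integral_re hk hk0 0
    simp only [taylorCoeff, iteratedDeriv_zero, hk0, coeff_invOneSubMulPow_succ, pow_zero, mul_one,
      real_smul, Nat.choose_zero_right, Nat.cast_one, Nat.factorial_zero, div_one,
      integral_complex_ofReal] at hcoeff_zero
    exact_mod_cast hcoeff_zero.symm
  · refine .of_forall fun θ => subset_closedConvexHull (mem_image_of_mem _ ?_)
    simp
  · intro n
    simp only [coeff_invOneSubMulPow_succ]
    exact (hweight.smul ((hinv_cont.pow n).const_mul _)).integrableOn_Icc.mono_set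
      Ioc_subset_Icc_self

/-- **Herglotz's theorem**. -/
theorem taylorSeries_mem_closedConvexHull (hk : DifferentiableOn ℂ k (ball 0 1)) (hk0 : k 0 = 1)
    (hre : ∀ z ∈ ball 0 1, 1 / 2 ≤ (k z).re) :
    taylorSeries k ∈ closedConvexHull ℝ (invOneSubMulPow 1 '' closedBall 0 1) := by
  have hlim : Tendsto (fun r : ℝ => taylorSeries fun z => k (r * z)) (𝓝[<] 1)
      (𝓝 (taylorSeries k)) := by
    rw [WithPiTopology.tendsto_iff_coeff_tendsto]
    intro n
    have hcont : Continuous fun r : ℝ => (r : ℂ) ^ n * taylorCoeff k n := by fun_prop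
    simpa [taylorSeries_comp_const_mul] using (hcont.tendsto 1).mono_left nhdsWithin_le_nhds
  refine isClosed_closedConvexHull.mem_of_tendsto hlim ?_
  filter_upwards [Ioo_mem_nhdsLT one_pos] with r hr
  have hmaps : MapsTo (fun z : ℂ => r * z) (closedBall 0 1) (ball 0 1) := fun z hz => by
    have : r * ‖z‖ < 1 := mul_lt_one_of_nonneg_of_lt_one_left hr.1.le hr.2 (by simpa using hz)
    simpa [abs_of_pos hr.1] using this
  exact taylorSeries_mem_closedConvexHull_of_closedBall
    (hk.comp (by fun_prop) hmaps) (by simpa using hk0)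
    fun z hz => hre _ (hmaps (sphere_subset_closedBall hz))

end Herglotz

section BoundarySchwarz

theorem re_sub_one_mul_sub_one_nonpos {ψ : ℂ → ℂ} (hψ : DifferentiableOn ℂ ψ (ball 0 1))
    (hmaps : MapsTo ψ (ball 0 1) (closedBall 0 1)) (hψ0 : ψ 0 = 0) (hψ1 : ψ 1 = 1) {m : ℂ}
    (hm : HasDerivAt ψ m 1) {y : ℂ} (hy : y ∈ closedBall 0 1) :
    ((m - 1) * (y - 1)).re ≤ 0 := by
  rcases eq_or_ne 1 y with rfl | hy1
  · simp
  -- By the Schwarz lemma `Re ψ z ≤ ‖z‖ ≤ (1 + ‖z‖²) / 2`, with equality at `z = 1`.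
  have hmax : IsLocalMaxOn (fun z => (ψ z).re - (1 + ‖z‖ ^ 2) / 2) (ball 0 1) 1 := by
    filter_upwards [self_mem_nhdsWithin] with z hz
    have hschwarz : ‖ψ z‖ ≤ ‖z‖ := by
      have := dist_le_div_mul_dist_of_mapsTo_ball hψ (by rwa [hψ0]) hz
      simpa [hψ0] using this
    have hre := re_le_norm (ψ z)
    simp only [hψ1, one_re, norm_one]
    nlinarith [sq_nonneg (1 - ‖z‖)]
  have hderiv : HasFDerivAt (fun z => (ψ z).re - (1 + ‖z‖ ^ 2) / 2) _ 1 :=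
    (reCLM.hasFDerivAt.comp 1 (hm.hasFDerivAt.restrictScalars ℝ)).sub
      ((((hasFDerivAt_id (1 : ℂ)).norm_sq).const_add 1).mul_const (2⁻¹ : ℝ))
  have hcone : y - 1 ∈ posTangentConeAt (ball (0 : ℂ) 1) 1 :=
    sub_mem_posTangentConeAt_of_openSegment_subset
      (openSegment_subset_ball_of_ne (by simp) hy hy1)
  refine le_of_eq_of_le ?_ (hmax.hasFDerivWithinAt_nonpos hderiv.hasFDerivWithinAt hcone)
  simp [sub_mul, mul_comm]

theorem one_le_of_hasDerivAt_of_mapsTo_closedBall {ψ : ℂ → ℂ}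
    (hψ : DifferentiableOn ℂ ψ (ball 0 1)) (hmaps : MapsTo ψ (ball 0 1) (closedBall 0 1))
    (hψ0 : ψ 0 = 0) (hψ1 : ψ 1 = 1) {m : ℂ} (hm : HasDerivAt ψ m 1) : 1 ≤ m := by
  obtain ⟨y, hy, hnorm⟩ := exists_norm_eq_mul_self (m - 1)
  have hy_re := re_sub_one_mul_sub_one_nonpos hψ hmaps hψ0 hψ1 hm (y := y) (by simp [hy])
  rw [mul_sub, mul_one, mul_comm, ← hnorm, sub_re, ofReal_re, sub_nonpos] at hy_re
  exact sub_nonneg.mp (re_eq_norm.mp (hy_re.antisymm' (re_le_norm _)))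

/-- **Jack's lemma**. -/
theorem one_le_mul_deriv_div_of_isMaxOn {ω : ℂ → ℂ} {s : Set ℂ} {z₀ : ℂ}
    (hω : DifferentiableOn ℂ ω s) (hs : s ∈ 𝓝 z₀) (hball : closedBall 0 ‖z₀‖ ⊆ s) (hω0 : ω 0 = 0)
    (hmax : IsMaxOn (fun z => ‖ω z‖) (closedBall 0 ‖z₀‖) z₀) (hz₀ : ω z₀ ≠ 0) :
    1 ≤ z₀ * deriv ω z₀ / ω z₀ := by
  have hmaps : MapsTo (fun z => z₀ * z) (ball 0 1) (closedBall 0 ‖z₀‖) := fun z hz => by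
    simpa using mul_le_of_le_one_right (norm_nonneg z₀) (mem_ball_zero_iff.mp hz).le
  have hω_deriv : HasDerivAt ω (deriv ω z₀) (z₀ * 1) := by
    rw [mul_one]
    exact (hω.differentiableAt hs).hasDerivAt
  refine one_le_of_hasDerivAt_of_mapsTo_closedBall (ψ := fun z => ω (z₀ * z) / ω z₀)
    ((hω.comp (by fun_prop) (hmaps.mono_right hball)).div_const _) (fun z hz => ?_) (by simp [hω0])
    (by simp [hz₀]) ?_
  · simpa using div_le_one_of_le₀ (hmax (hmaps hz)) (norm_nonneg _)
  · refine ((hω_deriv.comp 1 ((hasDerivAt_id 1).const_mul z₀)).div_const (ω z₀)).congr_deriv ?_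
    ring

theorem re_div_one_sub_le {w : ℂ} (hw : 1 ≤ ‖w‖) (hw1 : w ≠ 1) : (w / (1 - w)).re ≤ -1 / 2 := by
  have hnorm : 0 < normSq (1 - w) := normSq_pos.mpr (sub_ne_zero.mpr hw1.symm)
  have hw_sq : 1 ≤ normSq w := by
    rw [normSq_eq_norm_sq]
    exact one_le_pow₀ hw
  have hre : (w / (1 - w)).re = (w.re - normSq w) / normSq (1 - w) := by
    simp only [div_re, normSq_apply, sub_re, sub_im, one_re, one_im]
    ring
  have hnorm_sub : normSq (1 - w) = 1 + normSq w - 2 * w.re := by simp [normSq_sub]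
  rw [hre, div_le_div_iff₀ hnorm two_pos, hnorm_sub]
  linarith

end BoundarySchwarz

section MarxStrohhacker

theorem exists_differentiableOn_exp_eqOn_ball {G : ℂ → ℂ} {c : ℂ} {r : ℝ} (hr : 0 < r)
    (hG : DifferentiableOn ℂ G (ball c r)) (hG_ne : ∀ z ∈ ball c r, G z ≠ 0) :
    ∃ L : ℂ → ℂ, DifferentiableOn ℂ L (ball c r) ∧ L c = log (G c) ∧
      EqOn (fun z => exp (L z)) G (ball c r) := by
  obtain ⟨L, hLc, hL⟩ := ((hG.deriv isOpen_ball).div hG hG_ne).isExactOn_ball.with_val_at c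
    (log (G c))
  have hL_diff : DifferentiableOn ℂ L (ball c r) := fun z hz =>
    (hL z hz).differentiableAt.differentiableWithinAt
  have hlogDeriv : EqOn (logDeriv fun z => exp (L z)) (logDeriv G) (ball c r) := fun z hz => by
    rw [logDeriv_apply, (hL z hz).cexp.deriv, mul_div_cancel_left₀ _ (exp_ne_zero _)]
    rfl
  obtain ⟨a, -, ha⟩ := (logDeriv_eqOn_iff hL_diff.cexp hG isOpen_ball
    (convex_ball c r).isPreconnected hG_ne fun z _ => exp_ne_zero _).mp hlogDeriv
  have ha_one : a = 1 := by
    have hc := ha (mem_ball_self hr)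
    simp only [hLc, exp_log (hG_ne c (mem_ball_self hr)), Pi.smul_apply, smul_eq_mul] at hc
    exact mul_right_cancel₀ (hG_ne c (mem_ball_self hr)) (by rw [← hc, one_mul])
  exact ⟨L, hL_diff, hLc, by simpa [ha_one] using ha⟩

theorem norm_one_sub_inv_lt_one_iff {w : ℂ} (hw : w ≠ 0) : ‖1 - w⁻¹‖ < 1 ↔ 1 / 2 < w.re := by
  have hsub : 1 - w⁻¹ = (w - 1) / w := by rw [sub_div, div_self hw, one_div]
  rw [hsub, norm_div, div_lt_one (norm_pos_iff.mpr hw), ← sq_lt_sq₀ (norm_nonneg _) (norm_nonneg _),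
    ← normSq_eq_norm_sq, ← normSq_eq_norm_sq, normSq_sub]
  simp only [map_one, mul_one]
  constructor <;> intro h <;> linarith

theorem deriv_one_sub_inv {h : ℂ → ℂ} {z : ℂ} (hh : DifferentiableAt ℂ h z) (hz : h z ≠ 0) :
    deriv (fun z => 1 - (h z)⁻¹) z = logDeriv h z / h z := by
  rw [((hh.hasDerivAt.fun_inv hz).const_sub 1).deriv, neg_div, neg_neg, logDeriv_apply, div_div, sq]

theorem one_half_lt_re_of_re_logDeriv_pos {h : ℂ → ℂ} (hh : DifferentiableOn ℂ h (ball 0 1))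
    (hh0 : h 0 = 1) (hh_ne : ∀ z ∈ ball 0 1, h z ≠ 0)
    (hre : ∀ z ∈ ball 0 1, 0 < (1 + 2 * (z * logDeriv h z)).re) {z : ℂ} (hz : z ∈ ball 0 1) :
    1 / 2 < (h z).re := by
  refine (norm_one_sub_inv_lt_one_iff (hh_ne z hz)).mp ?_
  by_contra! hz_norm
  set ω : ℂ → ℂ := fun z => 1 - (h z)⁻¹ with hω_def
  have hω : DifferentiableOn ℂ ω (ball 0 1) := (hh.inv hh_ne).const_sub 1
  have hsub : closedBall (0 : ℂ) ‖z‖ ⊆ ball 0 1 :=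
    closedBall_subset_ball (mem_ball_zero_iff.mp hz)
  obtain ⟨z₀, hz₀, hmax⟩ := (isCompact_closedBall (0 : ℂ) ‖z‖).exists_isMaxOn ⟨z, by simp⟩
    (hω.mono hsub).continuousOn.norm
  have hz₀_le : closedBall (0 : ℂ) ‖z₀‖ ⊆ closedBall 0 ‖z‖ :=
    closedBall_subset_closedBall (mem_closedBall_zero_iff.mp hz₀)
  have hω_norm : 1 ≤ ‖ω z₀‖ := hz_norm.trans (hmax (by simp : z ∈ closedBall 0 ‖z‖))
  have hω_ne : ω z₀ ≠ 0 := norm_pos_iff.mp (one_pos.trans_le hω_norm)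
  have hjack := one_le_mul_deriv_div_of_isMaxOn hω (isOpen_ball.mem_nhds (hsub hz₀))
    (hz₀_le.trans hsub) (by simp [hω_def, hh0]) (hmax.on_subset hz₀_le) hω_ne
  set m := z₀ * deriv ω z₀ / ω z₀ with hm
  obtain ⟨hm_re, hm_im⟩ := le_def.mp hjack
  have hh_ne₀ := hh_ne z₀ (hsub hz₀)
  have hderiv : deriv ω z₀ = logDeriv h z₀ / h z₀ :=
    deriv_one_sub_inv (hh.differentiableAt (isOpen_ball.mem_nhds (hsub hz₀))) hh_ne₀
  have hlogDeriv : z₀ * logDeriv h z₀ = m * (ω z₀ / (1 - ω z₀)) := by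
    rw [hm, div_mul_div_cancel₀ hω_ne, hderiv, hω_def, sub_sub_cancel]
    field_simp
  have hω_re := re_div_one_sub_le hω_norm (by simpa [hω_def] using hh_ne₀)
  have hpos := hre z₀ (hsub hz₀)
  rw [hlogDeriv] at hpos
  simp only [add_re, one_re, mul_re, re_ofNat, im_ofNat, zero_mul, sub_zero, ← hm_im, one_im]
    at hpos hm_re
  nlinarith

/-- The **Marx–Strohhäcker theorem**. -/
theorem IsStarlikeFn.exists_eq_mul_sq {g : ℂ → ℂ} (hg : IsStarlikeFn g) :
    ∃ h : ℂ → ℂ, DifferentiableOn ℂ h (ball 0 1) ∧ h 0 = 1 ∧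
      (∀ z ∈ ball 0 1, 1 / 2 < (h z).re) ∧ ∀ z ∈ ball 0 1, g z = z * h z ^ 2 := by
  obtain ⟨hg_diff, hg0, hg1, hg_pos⟩ := hg
  set G := dslope g 0
  have hG : DifferentiableOn ℂ G (ball 0 1) :=
    (differentiableOn_dslope (ball_mem_nhds 0 one_pos)).mpr hg_diff
  have hG0 : G 0 = 1 := (dslope_same g 0).trans hg1
  have hgG (z : ℂ) : g z = z * G z := by
    simpa [hg0] using (sub_smul_dslope g 0 z).symm
  have hG_ne : ∀ z ∈ ball 0 1, G z ≠ 0 := fun z hz hGz => by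
    rcases eq_or_ne z 0 with rfl | hz0
    · exact one_ne_zero (hG0.symm.trans hGz)
    · simpa [hgG, hGz] using hg_pos z ⟨hz, hz0⟩
  obtain ⟨L, hL, hL0, hexp⟩ := exists_differentiableOn_exp_eqOn_ball one_pos hG hG_ne
  set h : ℂ → ℂ := fun z => exp (L z / 2) with hh_def
  have hh : DifferentiableOn ℂ h (ball 0 1) := (hL.div_const 2).cexp
  have hh0 : h 0 = 1 := by simp [hh_def, hL0, hG0]
  have hh_ne (z : ℂ) : h z ≠ 0 := exp_ne_zero _
  have hgh : EqOn g (fun z => z * h z ^ 2) (ball 0 1) := fun z hz => by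
    simp only [hgG, ← hexp hz, hh_def, ← exp_nat_mul]
    congr 2
    push_cast
    ring
  refine ⟨h, hh, hh0, fun z hz => one_half_lt_re_of_re_logDeriv_pos hh hh0 (fun z _ => hh_ne z)
    (fun z hz => ?_) hz, hgh⟩
  rcases eq_or_ne z 0 with rfl | hz0
  · simp
  have hlogDeriv : logDeriv g z = 1 / z + 2 * logDeriv h z := by
    have hhz := hh.differentiableAt (isOpen_ball.mem_nhds hz)
    have hmul := logDeriv_mul (f := id) (g := fun z => h z ^ 2) z hz0 (pow_ne_zero 2 (hh_ne z))
      differentiableAt_id (hhz.pow 2)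
    rw [logDeriv_id, logDeriv_fun_pow hhz] at hmul
    exact (logDeriv_congr_nhds (hgh.eventuallyEq_of_mem (isOpen_ball.mem_nhds hz))).eq_of_nhds.trans
      hmul
  have hpos := hg_pos z ⟨hz, hz0⟩
  rw [mul_div_assoc, ← logDeriv_apply, hlogDeriv, mul_add, mul_one_div_cancel hz0] at hpos
  convert hpos using 3
  ring

end MarxStrohhacker

section CloseToConvex

theorem re_pos_of_eventually_nhdsNE_re_pos {q : ℂ → ℂ} {c : ℂ} (hq : AnalyticAt ℂ q c)
    (hpos : ∀ᶠ z in 𝓝[≠] c, 0 < (q z).re) : 0 < (q c).re := by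
  by_contra! hc
  have hmax : IsLocalMax (norm ∘ fun z => exp (-q z)) c := by
    filter_upwards [eventually_nhdsWithin_iff.mp hpos] with z hz
    rcases eq_or_ne z c with rfl | hzc
    · exact le_rfl
    · simpa [norm_exp] using hc.trans (hz hzc).le
  have hconst := eventually_eq_of_isLocalMax_norm
    (hq.eventually_analyticAt.mono fun z hz => hz.differentiableAt.neg.cexp) hmax
  obtain ⟨z, hz, hz_pos⟩ := ((hconst.filter_mono nhdsWithin_le_nhds).and hpos).exists
  have hre : (q z).re = (q c).re := by simpa [norm_exp] using congrArg norm hz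
  exact hc.not_gt (hre ▸ hz_pos)

/-- The power series `(1 - x X) / (1 - v X)ᵈ` with `‖x‖ ≤ 1` and `‖v‖ ≤ 1`. For `d = 1` they
generate the functions `p` with `p 0 = 1` and `Re (e p) > 0` for some `‖e‖ = 1`, and for `d = 3` the
derivatives of close-to-convex functions. -/
def diskFractions (d : ℕ) : Set ℂ⟦X⟧ :=
  image2 (fun x v => (1 - C x * X) * invOneSubMulPow d v) (closedBall 0 1) (closedBall 0 1)

theorem mul_mem_closedConvexHull_diskFractions {d : ℕ} {F G : ℂ⟦X⟧}
    (hF : F ∈ closedConvexHull ℝ (diskFractions (d + 1)))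
    (hG : G ∈ closedConvexHull ℝ (invOneSubMulPow 1 '' closedBall 0 1)) :
    F * G ∈ closedConvexHull ℝ (diskFractions (d + 2)) := by
  refine mul_mem_of_mem_closedConvexHull convex_closedConvexHull isClosed_closedConvexHull ?_ hF hG
  rintro _ ⟨x, hx, v, hv, rfl⟩ _ ⟨w, hw, rfl⟩
  rw [mul_assoc]
  refine mapsTo_closedConvexHull (f := (LinearMap.mulLeft ℝ (1 - C x * X)).toAffineMap)
    (continuous_const_mul (1 - C x * X)) convex_closedConvexHull isClosed_closedConvexHull ?_
    (invOneSubMulPow_mul_mem_closedConvexHull (convex_closedBall 0 1) hv hw d)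
  rintro _ ⟨u, hu, rfl⟩
  exact subset_closedConvexHull (mem_image2_of_mem hx hu)

theorem affine_mem_closedConvexHull_diskFractions {c : ℂ} (hc : ‖c‖ ≤ 1) {K : ℂ⟦X⟧}
    (hK : K ∈ closedConvexHull ℝ (invOneSubMulPow 1 '' closedBall 0 1)) :
    (1 + C c) * K - C c ∈ closedConvexHull ℝ (diskFractions 1) := by
  refine mapsTo_closedConvexHull
    (f := (LinearMap.mulLeft ℝ (1 + C c)).toAffineMap - AffineMap.const ℝ _ (C c))
    ((continuous_const_mul (1 + C c)).sub continuous_const)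
    convex_closedConvexHull isClosed_closedConvexHull ?_ hK
  rintro _ ⟨w, hw, rfl⟩
  refine subset_closedConvexHull ⟨-(c * w), ?_, w, hw, ?_⟩
  · simpa using mul_le_one₀ hc (norm_nonneg w) (by simpa using hw)
  · have hw_inv := (one_sub_mul_invOneSubMulPow_succ 0 w).trans (invOneSubMulPow_zero w)
    simp only [zero_add, map_neg, map_mul, neg_mul, sub_neg_eq_add, AffineMap.coe_sub,
      LinearMap.coe_toAffineMap, AffineMap.coe_const, Pi.sub_apply, LinearMap.mulLeft_apply,
      Function.const_apply] at hw_inv ⊢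
    linear_combination -C c * hw_inv

theorem taylorSeries_mem_closedConvexHull_diskFractions {p : ℂ → ℂ}
    (hp : DifferentiableOn ℂ p (ball 0 1)) (hp0 : p 0 = 1) {e : ℂ} (he : ‖e‖ = 1)
    (hre : ∀ z ∈ ball 0 1, 0 < (e * p z).re) :
    taylorSeries p ∈ closedConvexHull ℝ (diskFractions 1) := by
  have he_re : 0 < e.re := by simpa [hp0] using hre 0 (by simp)
  have he_conj : e * conj e = 1 := by rw [mul_conj, normSq_eq_norm_sq, he]; simp
  have hden : ((2 * e.re : ℝ) : ℂ) ≠ 0 := ofReal_ne_zero.mpr (by positivity)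
  set k : ℂ → ℂ := fun z => (e * p z + conj e) / (2 * e.re : ℝ) with hk_def
  have hk : DifferentiableOn ℂ k (ball 0 1) := ((hp.const_mul e).add_const _).div_const _
  have hk0 : k 0 = 1 := by
    rw [hk_def]
    simp only [hp0, mul_one, add_conj]
    exact div_self hden
  have hk_re : ∀ z ∈ ball 0 1, 1 / 2 ≤ (k z).re := fun z hz => by
    rw [hk_def, div_ofReal_re, add_re, conj_re, div_le_div_iff₀ two_pos (by positivity)]
    linarith [hre z hz]
  have hp_eq : p = fun z => (1 + conj e ^ 2) * k z - conj e ^ 2 := by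
    ext z
    have hk_mul : k z * (e + conj e) = e * p z + conj e := by
      rw [add_conj]
      exact div_mul_cancel₀ _ hden
    linear_combination -conj e * hk_mul - (p z - k z) * he_conj
  have hk_an : AnalyticAt ℂ k 0 := hk.analyticAt (ball_mem_nhds 0 one_pos)
  rw [hp_eq, taylorSeries_sub (analyticAt_const.fun_mul hk_an) analyticAt_const,
    taylorSeries_const_mul, taylorSeries_const, map_add, map_one]
  exact affine_mem_closedConvexHull_diskFractions (by simp [he])
    (taylorSeries_mem_closedConvexHull hk hk0 hk_re)

theorem IsCloseToConvex.exists_deriv_eqOn_mul_sq {f : ℂ → ℂ} (hf : IsCloseToConvex f) :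
    ∃ p h : ℂ → ℂ, ∃ e : ℂ, ‖e‖ = 1 ∧
      DifferentiableOn ℂ p (ball 0 1) ∧ p 0 = 1 ∧ (∀ z ∈ ball 0 1, 0 < (e * p z).re) ∧
      DifferentiableOn ℂ h (ball 0 1) ∧ h 0 = 1 ∧ (∀ z ∈ ball 0 1, 1 / 2 < (h z).re) ∧
      EqOn (deriv f) (fun z => p z * h z ^ 2) (ball 0 1) := by
  obtain ⟨hf_diff, -, hf1, θ, g, hg, hre⟩ := hf
  obtain ⟨h, hh, hh0, hh_re, hgh⟩ := hg.exists_eq_mul_sq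
  have hh_ne : ∀ z ∈ ball 0 1, h z ≠ 0 := fun z hz hz0 => by
    have := hh_re z hz
    norm_num [hz0] at this
  set e := exp (θ * I)
  set p : ℂ → ℂ := fun z => deriv f z / h z ^ 2 with hp_def
  have hp : DifferentiableOn ℂ p (ball 0 1) :=
    (hf_diff.deriv isOpen_ball).div (hh.pow 2) fun z hz => pow_ne_zero 2 (hh_ne z hz)
  have hball : ball (0 : ℂ) 1 ∈ 𝓝 0 := ball_mem_nhds 0 one_pos
  have hp_pos : ∀ z ∈ ball 0 1, z ≠ 0 → 0 < (e * p z).re := fun z hz hz0 => by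
    have := hre z ⟨hz, hz0⟩
    rwa [hgh z hz, mul_assoc, mul_div_assoc, mul_div_mul_left _ _ hz0] at this
  have hp_pos_zero : 0 < (e * p 0).re :=
    re_pos_of_eventually_nhdsNE_re_pos (q := fun z => e * p z)
      ((hp.const_mul e).analyticAt hball) (by
        filter_upwards [nhdsWithin_le_nhds hball, self_mem_nhdsWithin] with z hz hz0
        exact hp_pos z hz hz0)
  refine ⟨p, h, e, norm_exp_ofReal_mul_I θ, hp, by simp [hp_def, hf1, hh0], fun z hz => ?_, hh, hh0,
    hh_re, fun z hz => (div_mul_cancel₀ _ (pow_ne_zero 2 (hh_ne z hz))).symm⟩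
  rcases eq_or_ne z 0 with rfl | hz0
  exacts [hp_pos_zero, hp_pos z hz hz0]

theorem IsCloseToConvex.taylorSeries_deriv_mem_closedConvexHull {f : ℂ → ℂ}
    (hf : IsCloseToConvex f) :
    taylorSeries (deriv f) ∈ closedConvexHull ℝ (diskFractions 3) := by
  obtain ⟨p, h, e, he, hp, hp0, hp_re, hh, hh0, hh_re, hf_eq⟩ := hf.exists_deriv_eqOn_mul_sq
  have hball : ball (0 : ℂ) 1 ∈ 𝓝 0 := ball_mem_nhds 0 one_pos
  have hp_an := hp.analyticAt hball
  have hh_an := hh.analyticAt hball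
  have hp_mem := taylorSeries_mem_closedConvexHull_diskFractions hp hp0 he hp_re
  have hh_mem := taylorSeries_mem_closedConvexHull hh hh0 fun z hz => (hh_re z hz).le
  have hprod : taylorSeries (deriv f) = taylorSeries p * taylorSeries h * taylorSeries h := by
    rw [← taylorSeries_mul hp_an hh_an, ← taylorSeries_mul (hp_an.fun_mul hh_an) hh_an]
    refine taylorSeries_congr (Filter.eventually_of_mem hball fun z hz => ?_)
    simp only [hf_eq hz, sq, mul_assoc]
  rw [hprod]
  exact mul_mem_closedConvexHull_diskFractions
    (mul_mem_closedConvexHull_diskFractions hp_mem hh_mem) hh_mem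

end CloseToConvex

section GeneralizedZalcman

theorem le_of_mem_closedConvexHull {E : Type*} [AddCommGroup E] [Module ℝ E] [TopologicalSpace E]
    {φ : E → ℝ} (hφ : ConvexOn ℝ univ φ) (hcont : Continuous φ) {S : Set E} {M : ℝ}
    (h : ∀ x ∈ S, φ x ≤ M) {x : E} (hx : x ∈ closedConvexHull ℝ S) : φ x ≤ M := by
  have hconv : Convex ℝ {x | φ x ≤ M} := by simpa using hφ.convex_le M
  exact closedConvexHull_min h hconv (isClosed_le hcont continuous_const) hx

theorem convexOn_mul_sq_sub {E : Type*} [AddCommGroup E] [Module ℝ E] {lam : ℝ} (hlam : 0 ≤ lam)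
    (ℓ₁ ℓ₂ : E →ₗ[ℝ] ℝ) : ConvexOn ℝ univ fun x => lam * ℓ₁ x ^ 2 - ℓ₂ x :=
  ((ConvexOn.comp_linearMap (f := fun x : ℝ => x ^ 2) even_two.convexOn_pow ℓ₁).smul hlam).sub
    (ℓ₂.concaveOn convex_univ)

theorem mul_re_sq_sub_re_le_of_mem_closedConvexHull {S : Set ℂ⟦X⟧} {lam : ℝ} (hlam : 0 ≤ lam)
    {i j : ℕ} {α β : ℂ} {M : ℝ}
    (h : ∀ F ∈ S, lam * (α * coeff i F).re ^ 2 - (β * coeff j F).re ≤ M) {F : ℂ⟦X⟧}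
    (hF : F ∈ closedConvexHull ℝ S) :
    lam * (α * coeff i F).re ^ 2 - (β * coeff j F).re ≤ M := by
  let ℓ (i : ℕ) (α : ℂ) : ℂ⟦X⟧ →ₗ[ℝ] ℝ :=
    reLm ∘ₗ LinearMap.mulLeft ℝ α ∘ₗ (coeff i).restrictScalars ℝ
  have hℓ (i : ℕ) (α : ℂ) : Continuous (ℓ i α) :=
    continuous_re.comp ((WithPiTopology.continuous_coeff ℂ i).const_mul α)
  exact le_of_mem_closedConvexHull (convexOn_mul_sq_sub hlam (ℓ i α) (ℓ j β))
    ((((hℓ i α).pow 2).const_mul lam).sub (hℓ j β)) h hF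

theorem norm_mul_sq_sub_le_of_forall_re_le {lam M : ℝ} (hlam : 0 ≤ lam) {a b : ℂ}
    (h : ∀ η : ℂ, ‖η‖ = 1 → lam * (η * a).re ^ 2 - (η ^ 2 * b).re ≤ M) :
    ‖lam * a ^ 2 - b‖ ≤ M := by
  obtain ⟨c, hc, hnorm⟩ := exists_norm_eq_mul_self (lam * a ^ 2 - b)
  obtain ⟨η, rfl⟩ := IsAlgClosed.exists_pow_nat_eq c two_pos
  rw [norm_pow, pow_eq_one_iff_of_nonneg (norm_nonneg η) two_ne_zero] at hc
  refine le_trans ?_ (h η hc)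
  have hre := congrArg re hnorm
  rw [ofReal_re, mul_sub, mul_left_comm, ← mul_pow, sub_re, re_ofReal_mul, sq (η * a),
    mul_re] at hre
  nlinarith [mul_nonneg hlam (mul_self_nonneg (η * a).im)]

theorem coeff_succ_one_sub_mul_invOneSubMulPow_three (k : ℕ) (x v : ℂ) :
    coeff (k + 1) ((1 - C x * X) * invOneSubMulPow 3 v) =
      (k + 2) * ((k + 3) * v ^ (k + 1) - (k + 1) * (x * v ^ k)) / 2 := by
  rw [sub_mul, one_mul, mul_assoc, map_sub, coeff_C_mul, coeff_succ_X_mul,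
    coeff_invOneSubMulPow_succ, coeff_invOneSubMulPow_succ, add_comm 2, add_comm 2,
    Nat.cast_choose_two, Nat.cast_choose_two]
  push_cast
  ring

theorem quadratic_form_nonneg_of_mul_eq_sq {α β γ : ℝ} (hα : 0 < α) (h : α * β = γ ^ 2) (x y : ℝ) :
    0 ≤ α * x ^ 2 + 2 * γ * x * y + β * y ^ 2 := by
  have hsq : α * (α * x ^ 2 + 2 * γ * x * y + β * y ^ 2) = (α * x + γ * y) ^ 2 := by
    linear_combination y ^ 2 * h
  exact nonneg_of_mul_nonneg_right (hsq ▸ sq_nonneg _) hα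

theorem mul_re_sq_sub_re_le_of_norm_le_one {m lam t : ℝ} (hm : 0 < m) (hlam : 0 ≤ lam) (ht : 0 < t)
    (hdisc : lam * m ^ 2 * (t + 1) ^ 2 = 4 * (m + 1) * (2 - lam)) {a b : ℂ} (ha : ‖a‖ ≤ 1)
    (hb : ‖b‖ ≤ 1) :
    lam * (((m + 2) * a - m * b) / 2).re ^ 2 - ((m + 1) * a ^ 2 - m * (a * b)).re ≤
      m + 1 + m / 2 * (t + t⁻¹) := by
  have hnorm {z : ℂ} (hz : ‖z‖ ≤ 1) : 0 ≤ 1 - z.re ^ 2 - z.im ^ 2 := by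
    have : ‖z‖ ^ 2 ≤ 1 := pow_le_one₀ (norm_nonneg z) hz
    rw [← normSq_eq_norm_sq, normSq_apply] at this
    linarith
  have hform := quadratic_form_nonneg_of_mul_eq_sq (α := 2 + lam * m * (t + 2))
    (β := 2 - lam * m * t) (γ := lam * (m + 2) - 2) (by positivity)
    (by linear_combination (-lam) * hdisc) (t * a.re) b.re
  have hident : m + 1 + m / 2 * (t + t⁻¹) - (lam * (((m + 2) * a - m * b) / 2).re ^ 2 -
        ((m + 1) * a ^ 2 - m * (a * b)).re) =
      m / (4 * t) * ((2 + lam * m * (t + 2)) * (t * a.re) ^ 2 +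
        2 * (lam * (m + 2) - 2) * (t * a.re) * b.re + (2 - lam * m * t) * b.re ^ 2) +
      (m + 1 + m * t / 2) * (1 - a.re ^ 2 - a.im ^ 2) +
      m / (2 * t) * (1 - b.re ^ 2 - b.im ^ 2) + m / (2 * t) * (t * a.im + b.im) ^ 2 := by
    have hre₁ : (((m + 2) * a - m * b) / 2).re = ((m + 2) * a.re - m * b.re) / 2 := by
      simp
    have hre₂ : ((m + 1) * a ^ 2 - m * (a * b)).re =
        (m + 1) * (a.re ^ 2 - a.im ^ 2) - m * (a.re * b.re - a.im * b.im) := by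
      simp [sq]
    rw [hre₁, hre₂]
    field_simp
    linear_combination -4 * t * a.re ^ 2 * hdisc
  rw [← sub_nonneg, hident]
  have := hnorm ha
  have := hnorm hb
  positivity

theorem le_of_mem_diskFractions_three {k : ℕ} {lam t : ℝ} (hlam : 0 ≤ lam) (ht : 0 < t)
    (hdisc : lam * (k + 1) ^ 2 * (t + 1) ^ 2 = 4 * (k + 2) * (2 - lam)) {η : ℂ} (hη : ‖η‖ = 1)
    {F : ℂ⟦X⟧} (hF : F ∈ diskFractions 3) :
    lam * (η / (k + 2) * coeff (k + 1) F).re ^ 2 -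
        (η ^ 2 / (2 * k + 3) * coeff (2 * k + 1 + 1) F).re ≤
      k + 2 + (k + 1) / 2 * (t + t⁻¹) := by
  obtain ⟨x, hx, v, hv, rfl⟩ := hF
  rw [mem_closedBall_zero_iff] at hx hv
  have hv_pow (i : ℕ) : ‖v‖ ^ i ≤ 1 := pow_le_one₀ (norm_nonneg v) hv
  have hbound := mul_re_sq_sub_re_le_of_norm_le_one (m := k + 1) (by positivity) hlam ht
    (by linear_combination hdisc) (a := η * v ^ (k + 1)) (b := η * (x * v ^ k))
    (by simpa [hη] using hv_pow (k + 1))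
    (by simpa [hη] using mul_le_one₀ hx (by positivity) (hv_pow k))
  have hk₂ : (k : ℂ) + 2 ≠ 0 := by exact_mod_cast (k + 1).succ_ne_zero
  have hk₃ : 2 * (k : ℂ) + 3 ≠ 0 := by exact_mod_cast (2 * k + 2).succ_ne_zero
  rw [coeff_succ_one_sub_mul_invOneSubMulPow_three, coeff_succ_one_sub_mul_invOneSubMulPow_three]
  convert hbound using 1
  · push_cast
    congr 4
    · field_simp
      ring
    · field_simp
      ring
  · ring

theorem IsCloseToConvex.norm_mul_taylorCoeff_sq_sub_le {f : ℂ → ℂ} (hf : IsCloseToConvex f) (k : ℕ)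
    {lam t : ℝ} (hlam : 0 ≤ lam) (ht : 0 < t)
    (hdisc : lam * (k + 1) ^ 2 * (t + 1) ^ 2 = 4 * (k + 2) * (2 - lam)) :
    ‖lam * taylorCoeff f (k + 2) ^ 2 - taylorCoeff f (2 * k + 3)‖ ≤
      k + 2 + (k + 1) / 2 * (t + t⁻¹) := by
  refine norm_mul_sq_sub_le_of_forall_re_le hlam fun η hη => ?_
  have hbound := mul_re_sq_sub_re_le_of_mem_closedConvexHull hlam
    (fun F => le_of_mem_diskFractions_three hlam ht hdisc hη)
    hf.taylorSeries_deriv_mem_closedConvexHull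
  have hk₂ : (k : ℂ) + 2 ≠ 0 := by exact_mod_cast (k + 1).succ_ne_zero
  have hk₃ : 2 * (k : ℂ) + 3 ≠ 0 := by exact_mod_cast (2 * k + 2).succ_ne_zero
  rw [coeff_taylorSeries, coeff_taylorSeries, taylorCoeff_deriv, taylorCoeff_deriv] at hbound
  have hcoeff₁ : η / (k + 2) * (((k + 1 : ℕ) + 1) * taylorCoeff f (k + 1 + 1)) =
      η * taylorCoeff f (k + 2) := by
    push_cast
    field_simp
    ring
  have hcoeff₂ : η ^ 2 / (2 * k + 3) *
      (((2 * k + 1 + 1 : ℕ) + 1) * taylorCoeff f (2 * k + 1 + 1 + 1)) =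
      η ^ 2 * taylorCoeff f (2 * k + 3) := by
    push_cast
    field_simp
    ring
  rwa [hcoeff₁, hcoeff₂] at hbound

theorem mul_lt_two_mul_sqrt {n lam : ℝ} (hlam : 0 < lam)
    (hlam_lt : lam * (n + 1) ^ 2 < 8 * n) : (n - 1) * lam < 2 * √(n * lam * (2 - lam)) := by
  have hsq : ((n - 1) * lam) ^ 2 < 2 ^ 2 * (n * lam * (2 - lam)) := by
    nlinarith [mul_lt_mul_of_pos_left hlam_lt hlam]
  have hlt := Real.lt_sqrt_of_sq_lt hsq
  rwa [Real.sqrt_mul (by positivity), Real.sqrt_sq zero_le_two] at hlt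

theorem add_mul_add_inv_eq {n lam s : ℝ} (hlam : 0 < lam) (hn : 1 < n)
    (hs : s ^ 2 = n * lam * (2 - lam)) (hlt : (n - 1) * lam < 2 * s)
    (hlam_lt : lam * (n + 1) ^ 2 < 8 * n) {t : ℝ} (ht : t = 2 * s / ((n - 1) * lam) - 1) :
    n + (n - 1) / 2 * (t + t⁻¹) =
      (lam * (4 * n * (n + 1) - (3 * n ^ 2 + 1) * lam) + 4 * n * (2 - lam) * s) /
        (lam * (8 * n - (n + 1) ^ 2 * lam)) := by
  have hm : n - 1 ≠ 0 := (sub_pos.2 hn).ne'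
  have hD : n * 8 - lam * (n + 1) ^ 2 ≠ 0 := by linarith
  have hne : 2 * s - (n - 1) * lam ≠ 0 := (sub_pos.2 hlt).ne'
  have ht' : t = (2 * s - (n - 1) * lam) / ((n - 1) * lam) := by
    rw [ht]
    field_simp
  rw [ht', inv_div]
  field_simp
  linear_combination -4 * lam * (n - 1) ^ 2 * hs

theorem generalized_zalcman_closeToConvex_n4_middle_lambda_general {n : ℕ} (hn : 2 ≤ n) {lam : ℝ}
    (hlam : 0 < lam) (hlam_lt : lam * (n + 1) ^ 2 < 8 * n) {f : ℂ → ℂ} (hf : IsCloseToConvex f) :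
    ‖(lam : ℂ) * taylorCoeff f n ^ 2 - taylorCoeff f (2 * n - 1)‖ ≤
      (lam * (4 * n * (n + 1) - (3 * n ^ 2 + 1) * lam) +
        4 * n * (2 - lam) * √(n * lam * (2 - lam))) / (lam * (8 * n - (n + 1) ^ 2 * lam)) := by
  have hn' : (1 : ℝ) < n := by exact_mod_cast hn
  have hlam2 : lam ≤ 2 := by nlinarith [sq_nonneg ((n : ℝ) - 1)]
  have hsq : √(n * lam * (2 - lam)) ^ 2 = n * lam * (2 - lam) :=
    Real.sq_sqrt (mul_nonneg (by positivity) (sub_nonneg.2 hlam2))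
  have hlt := mul_lt_two_mul_sqrt hlam hlam_lt
  rw [← add_mul_add_inv_eq hlam hn' hsq hlt hlam_lt rfl]
  set s := √(n * lam * (2 - lam))
  have hm : 0 < (n - 1) * lam := mul_pos (sub_pos.2 hn') hlam
  have ht : 0 < 2 * s / ((n - 1) * lam) - 1 := sub_pos.2 ((one_lt_div hm).2 hlt)
  have hdisc : lam * (n - 1) ^ 2 * (2 * s / ((n - 1) * lam) - 1 + 1) ^ 2 = 4 * n * (2 - lam) := by
    have := (sub_pos.2 hn').ne'
    rw [sub_add_cancel]
    field_simp
    linear_combination 4 * hsq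
  obtain ⟨k, rfl⟩ := Nat.exists_eq_add_of_le' hn
  have hcast : ((k + 2 : ℕ) : ℝ) - 1 = k + 1 := by
    push_cast
    ring
  rw [hcast] at ht hdisc ⊢
  exact_mod_cast hf.norm_mul_taylorCoeff_sq_sub_le k hlam.le ht (by exact_mod_cast hdisc)

end GeneralizedZalcman

theorem generalized_zalcman_closeToConvex_n4_middle_lambda
    (lam : ℝ) (hlam1 : 8 / 13 < lam) (hlam2 : lam < 1)
    (f : ℂ → ℂ) (hf : IsCloseToConvex f) :
    ‖(lam : ℂ) * (taylorCoeff f 4) ^ 2 - taylorCoeff f 7‖ ≤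
      (lam * (80 - 49 * lam) + 32 * (2 - lam) * Real.sqrt (lam * (2 - lam)))
        / (lam * (32 - 25 * lam)) := by
  have hsqrt : √((4 : ℕ) * lam * (2 - lam)) = 2 * √(lam * (2 - lam)) := by
    rw [mul_assoc, Real.sqrt_mul (by norm_num), show ((4 : ℕ) : ℝ) = 2 ^ 2 by norm_num,
      Real.sqrt_sq zero_le_two]
  have hgen := generalized_zalcman_closeToConvex_n4_middle_lambda_general (n := 4) (lam := lam)
    (by norm_num) (by linarith) (by push_cast; linarith) hf
  rw [hsqrt] at hgen
  convert hgen using 2 <;> push_cast <;> ring
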